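/- arXiv:math/0301084 — 2 statements merged into one kernel-verified Lean document; each statement's English description precedes it below -/
import Mathlib

section
/- Let T_1 ≤ SL_3(F_2) be the subgroup of matrices g with g_{21} = g_{31} = 0, let T_2 ≤ SL_3(F_2) be the subgroup of matrices g with g_{31} = g_{32} = 0, and let T_0 = T_1 ∩ T_2 (the upper-triangular matrices). Suppose μ_1 : T_1 → SL_3(ℤ_2) and μ_2 : T_2 → SL_3(ℤ_2) are group homomorphisms with π ∘ μ_1 and π ∘ μ_2 equal to the respective inclusions, and with μ_1|_{T_0} = μ_2|_{T_0}. Then there exist a group homomorphism μ : SL_3(F_2) → SL_3(ℤ_2) with π ∘ μ = id, and an element Z ∈ SL_3(ℤ_2) commuting with every element of μ_1(T_0), such that μ|_{T_1} = μ_1 and μ(g) = Z·μ_2(g)·Z^{-1} for all g ∈ T_2. -/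
open Matrix

/-- `SL₃(𝔽₂)`. -/
abbrev SL3F2 := Matrix.SpecialLinearGroup (Fin 3) (ZMod 2)

/-- `SL₃(ℤ₂)`, where `ℤ₂` is the ring of `2`-adic integers. -/
abbrev SL3Z2 := Matrix.SpecialLinearGroup (Fin 3) ℤ_[2]

/-- Entrywise reduction modulo `2`, as a group homomorphism `SL₃(ℤ₂) → SL₃(𝔽₂)`. -/
noncomputable def redMod2 : SL3Z2 →* SL3F2 :=
  Matrix.SpecialLinearGroup.map (PadicInt.toZMod (p := 2))

/-- The maximal parabolic subgroup `T₁ ≤ SL₃(𝔽₂)` of matrices `g` with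
`g₂₁ = g₃₁ = 0` (one-based indexing). -/
def T1 : Subgroup SL3F2 where
  carrier := {g | (g : Matrix (Fin 3) (Fin 3) (ZMod 2)) 1 0 = 0 ∧
    (g : Matrix (Fin 3) (Fin 3) (ZMod 2)) 2 0 = 0}
  one_mem' := by
    constructor <;> simp [Matrix.one_apply]
  mul_mem' := by
    rintro a b ⟨ha1, ha2⟩ ⟨hb1, hb2⟩
    constructor <;>
      rw [Matrix.SpecialLinearGroup.coe_mul, Matrix.mul_apply, Fin.sum_univ_three]
    · rw [ha1, hb1, hb2]; ring
    · rw [ha2, hb1, hb2]; ring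
  inv_mem' := by
    rintro g ⟨h1, h2⟩
    have hdet : (g : Matrix (Fin 3) (Fin 3) (ZMod 2)).det = 1 := g.2
    have hg00 : (g : Matrix (Fin 3) (Fin 3) (ZMod 2)) 0 0 ≠ 0 := by
      intro h0
      rw [Matrix.det_fin_three, h0, h1, h2] at hdet
      simp at hdet
    have hmul : ((g⁻¹ : SL3F2) : Matrix (Fin 3) (Fin 3) (ZMod 2)) *
        (g : Matrix (Fin 3) (Fin 3) (ZMod 2)) = 1 := by
      rw [← Matrix.SpecialLinearGroup.coe_mul, inv_mul_cancel,
        Matrix.SpecialLinearGroup.coe_one]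
    constructor
    · have e1 : (((g⁻¹ : SL3F2) : Matrix (Fin 3) (Fin 3) (ZMod 2)) *
          (g : Matrix (Fin 3) (Fin 3) (ZMod 2))) 1 0 = 0 := by
        rw [hmul]; simp [Matrix.one_apply]
      rw [Matrix.mul_apply, Fin.sum_univ_three, h1, h2] at e1
      simp only [mul_zero, add_zero] at e1
      rcases mul_eq_zero.mp e1 with h | h
      · exact h
      · exact absurd h hg00
    · have e2 : (((g⁻¹ : SL3F2) : Matrix (Fin 3) (Fin 3) (ZMod 2)) *
          (g : Matrix (Fin 3) (Fin 3) (ZMod 2))) 2 0 = 0 := by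
        rw [hmul]; simp [Matrix.one_apply]
      rw [Matrix.mul_apply, Fin.sum_univ_three, h1, h2] at e2
      simp only [mul_zero, add_zero] at e2
      rcases mul_eq_zero.mp e2 with h | h
      · exact h
      · exact absurd h hg00

/-- The maximal parabolic subgroup `T₂ ≤ SL₃(𝔽₂)` of matrices `g` with
`g₃₁ = g₃₂ = 0` (one-based indexing). -/
def T2 : Subgroup SL3F2 where
  carrier := {g | (g : Matrix (Fin 3) (Fin 3) (ZMod 2)) 2 0 = 0 ∧
    (g : Matrix (Fin 3) (Fin 3) (ZMod 2)) 2 1 = 0}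
  one_mem' := by
    constructor <;> simp [Matrix.one_apply]
  mul_mem' := by
    rintro a b ⟨ha1, ha2⟩ ⟨hb1, hb2⟩
    constructor <;>
      rw [Matrix.SpecialLinearGroup.coe_mul, Matrix.mul_apply, Fin.sum_univ_three]
    · rw [ha1, ha2, hb1]; ring
    · rw [ha1, ha2, hb2]; ring
  inv_mem' := by
    rintro g ⟨h1, h2⟩
    have hdet : (g : Matrix (Fin 3) (Fin 3) (ZMod 2)).det = 1 := g.2
    have hg22 : (g : Matrix (Fin 3) (Fin 3) (ZMod 2)) 2 2 ≠ 0 := by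
      intro h0
      rw [Matrix.det_fin_three, h0, h1, h2] at hdet
      simp at hdet
    have hmul : (g : Matrix (Fin 3) (Fin 3) (ZMod 2)) *
        ((g⁻¹ : SL3F2) : Matrix (Fin 3) (Fin 3) (ZMod 2)) = 1 := by
      rw [← Matrix.SpecialLinearGroup.coe_mul, mul_inv_cancel,
        Matrix.SpecialLinearGroup.coe_one]
    constructor
    · have e1 : ((g : Matrix (Fin 3) (Fin 3) (ZMod 2)) *
          ((g⁻¹ : SL3F2) : Matrix (Fin 3) (Fin 3) (ZMod 2))) 2 0 = 0 := by
        rw [hmul]; simp [Matrix.one_apply]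
      rw [Matrix.mul_apply, Fin.sum_univ_three, h1, h2] at e1
      simp only [zero_mul, zero_add] at e1
      rcases mul_eq_zero.mp e1 with h | h
      · exact absurd h hg22
      · exact h
    · have e2 : ((g : Matrix (Fin 3) (Fin 3) (ZMod 2)) *
          ((g⁻¹ : SL3F2) : Matrix (Fin 3) (Fin 3) (ZMod 2))) 2 1 = 0 := by
        rw [hmul]; simp [Matrix.one_apply]
      rw [Matrix.mul_apply, Fin.sum_univ_three, h1, h2] at e2
      simp only [zero_mul, zero_add] at e2
      rcases mul_eq_zero.mp e2 with h | h
      · exact absurd h hg22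
      · exact h

/-!
The argument works for `π : R → 𝔽₂` with `R` Henselian local, and has two halves.

*Existence.* Over `ℤ[ω]`, with `ω² + ω + 2 = 0`, Klein's simple group of order `168` is the group of
determinant-one isometries of a positive definite Hermitian form, and reduction modulo `ω` maps it
isomorphically onto `SL₃(𝔽₂)`: injectivity is a finite check on the vectors of norm `2`. By Hensel's
lemma `R` contains a root of `X² + X + 2` lying over `0`, which gives a section `ρ` of `SL₃(π)`.

*Rigidity.* `T₂` is isomorphic to `S₄`, and `𝔽₂³` has a basis `v, a v, b v`, where `a, b` generate
the normal four-group and `v` is fixed by an element `r` of order `3`. Averaging over `r` lifts this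
basis along `π`, and after rescaling to determinant `1` (a cube root exists by Hensel's lemma), the
relations of `S₄` determine the matrices of any lift of `T₂` in the lifted basis. Hence any two
lifts of `T₂` are conjugate by an element reducing to `1`; inverse transpose turns this into the
same statement for `T₁`.

Conjugating `ρ` so that it agrees with `μ₁` on `T₁`, it is still conjugate to `μ₂` on `T₂`; the
conjugating element `Z` centralizes `μ₁(T₀)` because `μ₁` and `μ₂` agree there.
-/

open scoped MatrixGroups QuadraticAlgebra

section Hensel

open Polynomial

instance henselianLocalRing_of_henselianRing {R : Type*} [CommRing R] [IsLocalRing R]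
    [HenselianRing R (IsLocalRing.maximalIdeal R)] : HenselianLocalRing R where
  is_henselian f hf a₀ h₁ h₂ :=
    HenselianRing.is_henselian f hf a₀ h₁ (h₂.map (Ideal.Quotient.mk _))

variable {R k : Type*} [CommRing R] [HenselianLocalRing R] [Field k] {π : R →+* k}

theorem exists_isRoot_map_eq (hπ : Function.Surjective π) {f : R[X]} (hf : f.Monic) {a : k}
    (ha : (f.map π).IsRoot a) (ha' : (f.map π).derivative.eval a ≠ 0) :
    ∃ b, f.IsRoot b ∧ π b = a := by
  have map_eq_zero_iff (x : R) : π x = 0 ↔ x ∈ IsLocalRing.maximalIdeal R := by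
    rw [← IsLocalRing.ker_eq_maximalIdeal π hπ, RingHom.mem_ker]
  obtain ⟨a₀, rfl⟩ := hπ a
  rw [IsRoot.def, eval_map_apply, map_eq_zero_iff] at ha
  rw [derivative_map, eval_map_apply, Ne, map_eq_zero_iff, IsLocalRing.notMem_maximalIdeal] at ha'
  obtain ⟨b, hb, hba⟩ := HenselianLocalRing.is_henselian f hf a₀ ha ha'
  exact ⟨b, hb, by rwa [← map_eq_zero_iff, map_sub, sub_eq_zero] at hba⟩

theorem exists_pow_eq_of_map_eq_one (hπ : Function.Surjective π) {n : ℕ} (hn : (n : k) ≠ 0) {u : R}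
    (hu : π u = 1) : ∃ l, l ^ n = u ∧ π l = 1 := by
  have hn₀ : n ≠ 0 := by
    rintro rfl
    exact hn Nat.cast_zero
  obtain ⟨l, hl, hπl⟩ := exists_isRoot_map_eq hπ (monic_X_pow_sub_C u hn₀) (a := 1)
    (by simp [hu]) (by simpa [derivative_X_pow] using hn)
  exact ⟨l, by simpa [sub_eq_zero] using hl, hπl⟩

theorem exists_coe_eq_smul_map_eq {n : Type*} [Fintype n] [DecidableEq n]
    (hπ : Function.Surjective π) (hn : (Fintype.card n : k) ≠ 0) {F : Matrix n n R}
    {N : Matrix.SpecialLinearGroup n k} (hF : π.mapMatrix F = N.1) :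
    ∃ (c : R) (M : Matrix.SpecialLinearGroup n R),
      M.1 = c • F ∧ Matrix.SpecialLinearGroup.map π M = N := by
  have hdet : π F.det = 1 := by rw [π.map_det, hF, N.2]
  obtain ⟨l, hl, hπl⟩ := exists_pow_eq_of_map_eq_one hπ hn hdet
  obtain ⟨l, rfl⟩ : IsUnit l := (IsLocalHom.of_surjective π hπ).map_nonunit l (hπl ▸ isUnit_one)
  have hπl' : π ↑l⁻¹ = 1 := by simp [hπl]
  refine ⟨↑l⁻¹, ⟨(↑l⁻¹ : R) • F, ?_⟩, rfl, Subtype.ext ?_⟩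
  · rw [det_smul, ← hl, ← mul_pow, Units.inv_mul, one_pow]
  · ext i j
    calc π (↑l⁻¹ * F i j) = π (F i j) := by rw [map_mul, hπl', one_mul]
      _ = N.1 i j := congr_fun₂ hF i j

theorem exists_mul_self_eq_neg_two_sub (π : R →+* ZMod 2) :
    ∃ α, α * α = -2 - α ∧ π α = 0 := by
  have hf : (X ^ 2 + X + 2 : R[X]).Monic := by monicity!
  obtain ⟨α, hα, hπα⟩ := exists_isRoot_map_eq (ZMod.ringHom_surjective π) hf (a := 0)
    (by simp; rfl) (by simp)
  refine ⟨α, ?_, hπα⟩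
  have : α ^ 2 + α + 2 = 0 := by simpa using hα
  linear_combination this

end Hensel

section ConjugateLifts

variable {E G : Type*} [Group E] [Group G]

/-- Any two homomorphic lifts along `π` of the inclusion of `T` are conjugate by an element of the
kernel of `π`. -/
def HasConjugateLifts (π : E →* G) (T : Subgroup G) : Prop :=
  ∀ μ ν : T →* E, (∀ g, π (μ g) = g) → (∀ g, π (ν g) = g) →
    ∃ P ∈ π.ker, ∀ g, ν g = P * μ g * P⁻¹

theorem HasConjugateLifts.map {π : E →* G} {T : Subgroup G} (hT : HasConjugateLifts π T)
    (Θ : E ≃* E) (θ : G ≃* G) (hΘ : ∀ x, π (Θ x) = θ (π x)) :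
    HasConjugateLifts π (T.map (θ : G →* G)) := by
  intro μ ν hμ hν
  have lift_twist (κ : T.map (θ : G →* G) →* E) (hκ : ∀ g, π (κ g) = g) (g : T) :
      π (Θ.symm (κ (θ.subgroupMap T g))) = g := by
    rw [← θ.apply_eq_iff_eq, ← hΘ, Θ.apply_symm_apply, hκ]
    rfl
  obtain ⟨P, hP, hconj⟩ := hT
    ((Θ.symm : E →* E).comp (μ.comp (θ.subgroupMap T : T →* T.map (θ : G →* G))))
    ((Θ.symm : E →* E).comp (ν.comp (θ.subgroupMap T : T →* T.map (θ : G →* G))))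
    (lift_twist μ hμ) (lift_twist ν hν)
  refine ⟨Θ P, by rw [MonoidHom.mem_ker, hΘ, hP, map_one], fun g ↦ ?_⟩
  obtain ⟨g, rfl⟩ := (θ.subgroupMap T).surjective g
  simpa using congrArg Θ (hconj g)

theorem exists_amalgam_of_hasConjugateLifts {π : E →* G} {T₁ T₂ : Subgroup G}
    (h₁ : HasConjugateLifts π T₁) (h₂ : HasConjugateLifts π T₂)
    {ρ : G →* E} (hρ : ∀ g, π (ρ g) = g) {μ₁ : T₁ →* E} {μ₂ : T₂ →* E}
    (hμ₁ : ∀ g, π (μ₁ g) = g) (hμ₂ : ∀ g, π (μ₂ g) = g)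
    (hagree : ∀ (g : G) (hg₁ : g ∈ T₁) (hg₂ : g ∈ T₂), μ₁ ⟨g, hg₁⟩ = μ₂ ⟨g, hg₂⟩) :
    ∃ (μ : G →* E) (Z : E), (∀ g, π (μ g) = g) ∧
      (∀ (g : G) (hg₁ : g ∈ T₁), g ∈ T₂ → Z * μ₁ ⟨g, hg₁⟩ = μ₁ ⟨g, hg₁⟩ * Z) ∧
      (∀ g : T₁, μ g = μ₁ g) ∧ ∀ g : T₂, μ g = Z * μ₂ g * Z⁻¹ := by
  obtain ⟨P, hP, hPconj⟩ := h₁ (ρ.comp T₁.subtype) μ₁ (fun g ↦ hρ g) hμ₁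
  obtain ⟨Q, -, hQconj⟩ := h₂ (ρ.comp T₂.subtype) μ₂ (fun g ↦ hρ g) hμ₂
  set μ : G →* E := (MulAut.conj P).toMonoidHom.comp ρ
  have hμT₁ (g : T₁) : μ g = μ₁ g := (hPconj g).symm
  have hμT₂ (g : T₂) : μ g = P * Q⁻¹ * μ₂ g * (P * Q⁻¹)⁻¹ := by
    rw [hQconj]
    simp [μ, mul_assoc]
  refine ⟨μ, P * Q⁻¹, fun g ↦ ?_, fun g hg₁ hg₂ ↦ ?_, hμT₁, hμT₂⟩
  · simp [μ, hρ, (MonoidHom.mem_ker).1 hP]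
  · have hfix := hμT₂ ⟨g, hg₂⟩
    rwa [← hagree g hg₁ hg₂, ← hμT₁ ⟨g, hg₁⟩, eq_mul_inv_iff_mul_eq, hμT₁ ⟨g, hg₁⟩, eq_comm]
      at hfix

end ConjugateLifts

section SpecialIsometries

variable {n R : Type*} [Fintype n] [DecidableEq n] [CommRing R] [StarRing R]

/-- The subgroup of `SLₙ(R)` preserving the sesquilinear form with Gram matrix `H`. -/
def specialIsometries (H : Matrix n n R) : Subgroup (Matrix.SpecialLinearGroup n R) where
  carrier := {g | g.1ᴴ * H * g.1 = H}
  one_mem' := by simp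
  mul_mem' {g h} hg hh := by
    calc (g * h).1ᴴ * H * (g * h).1
        = h.1ᴴ * (g.1ᴴ * H * g.1) * h.1 := by
          simp only [Matrix.SpecialLinearGroup.coe_mul, conjTranspose_mul, Matrix.mul_assoc]
      _ = H := by rw [hg, hh]
  inv_mem' {g} hg := by
    have hinv : g.1 * g⁻¹.1 = 1 := by
      rw [← Matrix.SpecialLinearGroup.coe_mul, mul_inv_cancel, Matrix.SpecialLinearGroup.coe_one]
    calc g⁻¹.1ᴴ * H * g⁻¹.1
        = g⁻¹.1ᴴ * (g.1ᴴ * H * g.1) * g⁻¹.1 := by rw [hg]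
      _ = (g.1 * g⁻¹.1)ᴴ * H * (g.1 * g⁻¹.1) := by
          simp only [conjTranspose_mul, Matrix.mul_assoc]
      _ = H := by rw [hinv, conjTranspose_one, Matrix.one_mul, Matrix.mul_one]

theorem star_col_dotProduct_mulVec_col {H : Matrix n n R} {g : Matrix.SpecialLinearGroup n R}
    (hg : g ∈ specialIsometries H) (i j : n) :
    star (g.1.col i) ⬝ᵥ H *ᵥ g.1.col j = H i j := by
  have hij : (g.1ᴴ * H * g.1) i j = H i j := congr_fun₂ hg i j
  rwa [Matrix.mul_assoc] at hij

end SpecialIsometries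

section KleinForm

/-- The ring of integers `ℤ[ω]` of `ℚ(√-7)`, where `ω² + ω + 2 = 0`. -/
abbrev KleinInt := QuadraticAlgebra ℤ (-2) (-1)

/-- The Hermitian form whose automorphism group is Klein's complex reflection group of order `336`
(number 24 in the Shephard–Todd list); it is positive definite of determinant `1`. -/
def kleinForm : Matrix (Fin 3) (Fin 3) KleinInt :=
  !![2, star ω, ω; ω, 2, star ω; star ω, ω, 2]

theorem KleinInt.norm_nonneg (z : KleinInt) : 0 ≤ z.norm := by
  rw [QuadraticAlgebra.norm_def]
  nlinarith [sq_nonneg (2 * z.re - z.im), sq_nonneg z.im]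

theorem four_mul_kleinForm_apply_self (v : Fin 3 → KleinInt) (i : Fin 3) :
    4 * (star v ⬝ᵥ kleinForm *ᵥ v) =
      QuadraticAlgebra.C (2 * (2 * v (i + 1) + ω * v i + star ω * v (i + 2)).norm +
        (2 * v (i + 2) - ω * v i).norm + 2 * (v i).norm) := by
  -- Complete the square, first in `v (i + 1)` and then in `v (i + 2)`.
  ext <;> fin_cases i <;>
    simp [dotProduct, mulVec, Fin.sum_univ_three, kleinForm, QuadraticAlgebra.norm_def,
      QuadraticAlgebra.re_star] <;>
    ring

theorem norm_le_four_of_kleinForm_apply_self_eq_two {v : Fin 3 → KleinInt}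
    (hv : star v ⬝ᵥ kleinForm *ᵥ v = 2) (i : Fin 3) : (v i).norm ≤ 4 := by
  have h := congrArg QuadraticAlgebra.re (four_mul_kleinForm_apply_self v i)
  rw [hv, QuadraticAlgebra.re_C, show (4 * 2 : KleinInt).re = 8 from rfl] at h
  linarith [KleinInt.norm_nonneg (2 * v (i + 1) + ω * v i + star ω * v (i + 2)),
    KleinInt.norm_nonneg (2 * v (i + 2) - ω * v i)]

/-- A box of coefficients containing every element of `ℤ[ω]` of norm at most `4`. -/
noncomputable def kleinBox : Finset KleinInt :=
  (Finset.Icc (-2) 2 ×ˢ Finset.Icc (-1) 1).map (QuadraticAlgebra.equivProd _ _).symm.toEmbedding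

theorem mem_kleinBox_of_norm_le_four {z : KleinInt} (hz : z.norm ≤ 4) : z ∈ kleinBox := by
  rw [QuadraticAlgebra.norm_def] at hz
  have him : z.im ∈ Finset.Icc (-1) 1 := by
    rw [Finset.mem_Icc]
    constructor <;> nlinarith [sq_nonneg (2 * z.re - z.im)]
  have hre : z.re ∈ Finset.Icc (-2) 2 := by
    rw [Finset.mem_Icc]
    constructor <;> nlinarith [sq_nonneg (z.re - 4 * z.im)]
  exact Finset.mem_map.2 ⟨(z.re, z.im), Finset.mem_product.2 ⟨hre, him⟩, rfl⟩

/-- The vectors `v` of `ℤ[ω]³` with `⟨v, v⟩ = 2` congruent to the basis vector `eⱼ` modulo `ω`. -/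
noncomputable def kleinRoots (j : Fin 3) : Finset (Fin 3 → KleinInt) :=
  {v ∈ Fintype.piFinset fun i ↦ {z ∈ kleinBox | (z.re : ZMod 2) = (1 : Matrix _ _ _) i j} |
    star v ⬝ᵥ kleinForm *ᵥ v = 2}

theorem eq_one_of_kleinRoots : ∀ u ∈ kleinRoots 0, ∀ v ∈ kleinRoots 1, ∀ w ∈ kleinRoots 2,
    star u ⬝ᵥ kleinForm *ᵥ v = star ω → star v ⬝ᵥ kleinForm *ᵥ w = star ω →
    star u ⬝ᵥ kleinForm *ᵥ w = ω → (of ![u, v, w])ᵀ.det = 1 → (of ![u, v, w])ᵀ = 1 := by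
  decide +kernel

/-- The ring homomorphism `ℤ[ω] → R` sending `ω` to a root `α` of `X² + X + 2`. -/
def kleinEval {R : Type*} [CommRing R] (α : R) (hα : α * α = -2 - α) : KleinInt →+* R :=
  (QuadraticAlgebra.lift ⟨α, by rw [hα]; simp [sub_eq_add_neg]⟩ : KleinInt →ₐ[ℤ] R)

theorem kleinEval_apply {R : Type*} [CommRing R] (α : R) (hα : α * α = -2 - α) (z : KleinInt) :
    kleinEval α hα z = z.re + z.im * α := by
  simp [kleinEval, QuadraticAlgebra.lift]

theorem comp_kleinEval {R S : Type*} [CommRing R] [CommRing S] (f : R →+* S) {α : R} {β : S}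
    (hα : α * α = -2 - α) (hβ : β * β = -2 - β) (h : f α = β) :
    f.comp (kleinEval α hα) = kleinEval β hβ := by
  ext z
  simp [kleinEval_apply, h]

/-- Reduction of `ℤ[ω]` modulo the prime `ω` above `2`. -/
def modOmega : KleinInt →+* ZMod 2 := kleinEval 0 (by decide)

theorem modOmega_apply (z : KleinInt) : modOmega z = z.re := by
  simp [modOmega, kleinEval_apply]

theorem col_mem_kleinRoots {g : SL(3, KleinInt)} (hg : g ∈ specialIsometries kleinForm)
    (h : Matrix.SpecialLinearGroup.map modOmega g = 1) (j : Fin 3) :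
    g.1.col j ∈ kleinRoots j := by
  have hnorm : star (g.1.col j) ⬝ᵥ kleinForm *ᵥ g.1.col j = 2 := by
    rw [star_col_dotProduct_mulVec_col hg]
    fin_cases j <;> rfl
  have hmod (i : Fin 3) : ((g.1 i j).re : ZMod 2) = (1 : Matrix _ _ _) i j := by
    rw [← modOmega_apply]
    exact congr_fun₂ (congrArg Subtype.val h) i j
  exact Finset.mem_filter.2 ⟨Fintype.mem_piFinset.2 fun i ↦ Finset.mem_filter.2
    ⟨mem_kleinBox_of_norm_le_four (norm_le_four_of_kleinForm_apply_self_eq_two hnorm i), hmod i⟩,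
    hnorm⟩

theorem eq_one_of_map_modOmega_eq_one {g : SL(3, KleinInt)}
    (hg : g ∈ specialIsometries kleinForm)
    (h : Matrix.SpecialLinearGroup.map modOmega g = 1) : g = 1 := by
  have hcols : (of ![g.1.col 0, g.1.col 1, g.1.col 2])ᵀ = g.1 := by
    ext i j : 1
    fin_cases j <;> rfl
  have hgram := star_col_dotProduct_mulVec_col hg
  refine Subtype.ext (hcols.symm.trans (eq_one_of_kleinRoots _ (col_mem_kleinRoots hg h 0)
    _ (col_mem_kleinRoots hg h 1) _ (col_mem_kleinRoots hg h 2)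
    (hgram 0 1) (hgram 1 2) (hgram 0 2) ?_))
  rw [hcols, g.2]

end KleinForm

section Generation

theorem eq_top_of_forall_transvection_mem {n : Type*} [Fintype n] [DecidableEq n] [Nontrivial n]
    {S : Subgroup (Matrix.SpecialLinearGroup n (ZMod 2))}
    (hS : ∀ (i j : n) (hij : i ≠ j), SpecialLinearGroup.transvection hij 1 ∈ S) : S = ⊤ := by
  have eq_one : ∀ {c : ZMod 2}, c ≠ 0 → c = 1 := by decide
  refine (Subgroup.eq_top_iff' S).2 fun g ↦
    Matrix.SpecialLinearGroup.diagonal_transvection_induction' (· ∈ S) g ?_ ?_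
      fun _ _ ↦ S.mul_mem
  · intro i j hij c hc
    have : Matrix.SpecialLinearGroup.diag2n hij c hc = 1 := by
      ext
      simp [Matrix.SpecialLinearGroup.diag2n_coe, eq_one hc]
    exact this ▸ S.one_mem
  · intro i j hij c
    rcases eq_or_ne c 0 with rfl | hc
    · rw [Matrix.SpecialLinearGroup.transvection_coeff_zero]
      exact S.one_mem
    · exact eq_one hc ▸ hS i j hij

/-- The permutation matrix of the cycle `e₀ ↦ e₁ ↦ e₂ ↦ e₀`. -/
def cyclicPerm (R : Type*) [CommRing R] : SL(3, R) :=
  ⟨!![0, 0, 1; 1, 0, 0; 0, 1, 0], by simp [det_fin_three]⟩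

theorem eq_top_of_cyclicPerm_mem {S : Subgroup SL(3, ZMod 2)} (hc : cyclicPerm (ZMod 2) ∈ S)
    (ht : SpecialLinearGroup.transvection (zero_ne_one : (0 : Fin 3) ≠ 1) 1 ∈ S) : S = ⊤ := by
  have conj_transvection : ∀ (i j : Fin 3) (hij : i ≠ j),
      cyclicPerm (ZMod 2) * SpecialLinearGroup.transvection hij 1 * (cyclicPerm (ZMod 2))⁻¹ =
        SpecialLinearGroup.transvection ((add_left_injective 1).ne hij) 1 := by
    decide +kernel
  have transvection_mul_sq : ∀ (i j k : Fin 3) (hij : i ≠ j) (hjk : j ≠ k) (hik : i ≠ k),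
      (SpecialLinearGroup.transvection hij (1 : ZMod 2) *
        SpecialLinearGroup.transvection hjk 1) ^ 2 = SpecialLinearGroup.transvection hik 1 := by
    decide +kernel
  have conj_mem {i j : Fin 3} {hij : i ≠ j} (h : SpecialLinearGroup.transvection hij 1 ∈ S) :
      SpecialLinearGroup.transvection ((add_left_injective 1).ne hij) 1 ∈ S :=
    conj_transvection i j hij ▸ S.mul_mem (S.mul_mem hc h) (S.inv_mem hc)
  have mem_succ : ∀ (i : Fin 3) (hi : i ≠ i + 1), SpecialLinearGroup.transvection hi 1 ∈ S
    | 0, _ => ht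
    | 1, _ => conj_mem ht
    | 2, _ => conj_mem (conj_mem ht)
  refine eq_top_of_forall_transvection_mem fun i k hik ↦ ?_
  obtain rfl | rfl : k = i + 1 ∨ k = i + 1 + 1 := by revert i k; decide
  · exact mem_succ i hik
  · have hi : i ≠ i + 1 := by simp
    exact transvection_mul_sq i (i + 1) (i + 1 + 1) hi (by simp) hik ▸
      S.pow_mem (S.mul_mem (mem_succ i hi) (mem_succ (i + 1) (by simp))) 2

end Generation

section KleinGroup

/-- The negative of the reflection of `ℤ[ω]³` in the basis vector `e₀`, with respect to
`kleinForm`. -/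
def negReflection : SL(3, KleinInt) :=
  ⟨!![1, star ω, ω; 0, -1, 0; 0, 0, -1], by simp [det_fin_three]⟩

theorem exists_mem_specialIsometries_map_modOmega_eq (g : SL(3, ZMod 2)) :
    ∃ x ∈ specialIsometries kleinForm, Matrix.SpecialLinearGroup.map modOmega x = g := by
  have htop : (specialIsometries kleinForm).map (Matrix.SpecialLinearGroup.map modOmega) = ⊤ := by
    refine eq_top_of_cyclicPerm_mem ⟨cyclicPerm KleinInt, ?_, ?_⟩ ⟨negReflection, ?_, ?_⟩
    · change (cyclicPerm KleinInt).1ᴴ * kleinForm * (cyclicPerm KleinInt).1 = kleinForm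
      decide +kernel
    · ext i j
      rw [Matrix.SpecialLinearGroup.map_apply_coe, RingHom.mapMatrix_apply, map_apply,
        modOmega_apply]
      fin_cases i <;> fin_cases j <;> rfl
    · change negReflection.1ᴴ * kleinForm * negReflection.1 = kleinForm
      decide +kernel
    · ext i j
      rw [Matrix.SpecialLinearGroup.map_apply_coe, RingHom.mapMatrix_apply, map_apply,
        modOmega_apply]
      fin_cases i <;> fin_cases j <;> rfl
  exact Subgroup.mem_map.1 (htop ▸ Subgroup.mem_top g)

/-- Klein's simple group of order `168`, acting on `ℤ[ω]³`, is isomorphic to `SL₃(𝔽₂)` by reduction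
modulo `ω`. -/
noncomputable def kleinEquiv : specialIsometries kleinForm ≃* SL(3, ZMod 2) :=
  MulEquiv.ofBijective
    ((Matrix.SpecialLinearGroup.map modOmega).comp (specialIsometries kleinForm).subtype)
    ⟨(injective_iff_map_eq_one _).2 fun g h ↦
        Subtype.ext (eq_one_of_map_modOmega_eq_one g.2 h),
      fun g ↦
        have ⟨x, hx, hxg⟩ := exists_mem_specialIsometries_map_modOmega_eq g
        ⟨⟨x, hx⟩, hxg⟩⟩

theorem exists_section_map {R : Type*} [CommRing R] (π : R →+* ZMod 2) {α : R}
    (hα : α * α = -2 - α) (hπα : π α = 0) :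
    ∃ ρ : SL(3, ZMod 2) →* SL(3, R), ∀ g, Matrix.SpecialLinearGroup.map π (ρ g) = g := by
  refine ⟨(Matrix.SpecialLinearGroup.map (kleinEval α hα)).comp
    ((specialIsometries kleinForm).subtype.comp kleinEquiv.symm.toMonoidHom), fun g ↦ ?_⟩
  have hcomp : π.comp (kleinEval α hα) = modOmega := comp_kleinEval π hα _ hπα
  calc Matrix.SpecialLinearGroup.map π
        (Matrix.SpecialLinearGroup.map (kleinEval α hα) (kleinEquiv.symm g))
      = Matrix.SpecialLinearGroup.map (π.comp (kleinEval α hα)) (kleinEquiv.symm g) := rfl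
    _ = kleinEquiv (kleinEquiv.symm g) := by rw [hcomp]; rfl
    _ = g := kleinEquiv.apply_symm_apply g

end KleinGroup

section NormalForm

/-- The relations of the symmetric group `S₄` used below, for `a = (0 1)(2 3)`, `b = (0 2)(1 3)`,
`r = (1 2 3)` and `h = (2 3)`. -/
structure S4Relations {G : Type*} [Group G] (a b r h : G) : Prop where
  a_mul_a : a * a = 1
  r_pow_three : r ^ 3 = 1
  h_mul_h : h * h = 1
  r_mul_a : r * a = b * r
  r_mul_b : r * b = a * b * r
  h_mul_a : h * a = a * h
  h_mul_b : h * b = a * b * h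
  r_mul_h_mul_r : r * h * r = h

theorem S4Relations.map {G G' : Type*} [Group G] [Group G'] {a b r h : G}
    (hrel : S4Relations a b r h) (f : G →* G') : S4Relations (f a) (f b) (f r) (f h) := by
  constructor <;> simp only [← map_mul, ← map_pow, hrel.a_mul_a, hrel.r_pow_three, hrel.h_mul_h,
    hrel.r_mul_a, hrel.r_mul_b, hrel.h_mul_a, hrel.h_mul_b, hrel.r_mul_h_mul_r, map_one]

variable {R : Type*} [CommRing R]

/-- The columns of `M` are `v`, `a v` and `b v` for a vector `v` fixed by `r`. -/
structure IsFrame (a b r M : SL(3, R)) : Prop where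
  a_smul : a • M • (Pi.single 0 1 : Fin 3 → R) = M • Pi.single 1 1
  b_smul : b • M • (Pi.single 0 1 : Fin 3 → R) = M • Pi.single 2 1
  r_smul : r • M • (Pi.single 0 1 : Fin 3 → R) = M • Pi.single 0 1

theorem IsFrame.conj {a b r M : SL(3, R)} (hM : IsFrame a b r M) :
    IsFrame (M⁻¹ * a * M) (M⁻¹ * b * M) (M⁻¹ * r * M) 1 where
  a_smul := by simp only [mul_smul, one_smul, hM.a_smul, inv_smul_smul]
  b_smul := by simp only [mul_smul, one_smul, hM.b_smul, inv_smul_smul]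
  r_smul := by simp only [mul_smul, one_smul, hM.r_smul, inv_smul_smul]

theorem coe_eq_of_smul_single {g : SL(3, R)} {u v w : Fin 3 → R}
    (hu : g • (Pi.single 0 1 : Fin 3 → R) = u) (hv : g • (Pi.single 1 1 : Fin 3 → R) = v)
    (hw : g • (Pi.single 2 1 : Fin 3 → R) = w) :
    g.1 = !![u 0, v 0, w 0; u 1, v 1, w 1; u 2, v 2, w 2] := by
  subst hu hv hw
  ext i j
  fin_cases i <;> fin_cases j <;> simp [Matrix.SpecialLinearGroup.smul_def]

variable {a b r h : SL(3, R)}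

theorem smul_single_of_isFrame_one (hrel : S4Relations a b r h) (hframe : IsFrame a b r 1) :
    a • (Pi.single 1 1 : Fin 3 → R) = Pi.single 0 1 ∧
      r • (Pi.single 1 1 : Fin 3 → R) = Pi.single 2 1 ∧
      r • (Pi.single 2 1 : Fin 3 → R) = a • Pi.single 2 1 ∧
      a • a • (Pi.single 2 1 : Fin 3 → R) = Pi.single 2 1 := by
  obtain ⟨ha, hb, hr⟩ := hframe
  simp only [one_smul] at ha hb hr
  refine ⟨?_, ?_, ?_, ?_⟩
  · rw [← ha, ← mul_smul, hrel.a_mul_a, one_smul]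
  · rw [← ha, ← mul_smul, hrel.r_mul_a, mul_smul, hr, hb]
  · rw [← hb, ← mul_smul, hrel.r_mul_b, mul_smul, hr, mul_smul]
  · rw [← mul_smul, hrel.a_mul_a, one_smul]

theorem coe_a_r_of_isFrame_one (hrel : S4Relations a b r h) (hframe : IsFrame a b r 1) :
    a.1 = !![0, 1, -1; 1, 0, -1; 0, 0, -1] ∧ r.1 = !![1, 0, -1; 0, 0, -1; 0, 1, -1] := by
  obtain ⟨ha₁, hr₁, hr₂, ha₂⟩ := smul_single_of_isFrame_one hrel hframe
  obtain ⟨ha₀, -, hr₀⟩ := hframe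
  simp only [one_smul] at ha₀ hr₀
  set d : Fin 3 → R := a • Pi.single 2 1 with hd
  have ha := coe_eq_of_smul_single ha₀ ha₁ hd.symm
  have hr := coe_eq_of_smul_single hr₀ hr₁ hr₂
  have det_a : -d 2 = 1 := by simpa [ha, det_fin_three] using a.2
  have det_r : -d 1 = 1 := by simpa [hr, det_fin_three] using r.2
  have had : d 1 + d 0 * d 2 = 0 := by
    simpa [Matrix.SpecialLinearGroup.smul_def, ha, mulVec, dotProduct, Fin.sum_univ_three]
      using congr_fun ha₂ 0
  have h2 : d 2 = -1 := by linear_combination -det_a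
  have h1 : d 1 = -1 := by linear_combination -det_r
  have h0 : d 0 = -1 := by linear_combination h1 + d 0 * h2 - had
  simp [ha, hr, h0, h1, h2]

theorem exists_h_smul_single_zero_eq (hrel : S4Relations a b r h) (hframe : IsFrame a b r 1) :
    ∃ p : R, h • (Pi.single 0 1 : Fin 3 → R) = p • Pi.single 0 1 := by
  set y : Fin 3 → R := h • Pi.single 0 1
  have hr₀ : r • (Pi.single 0 1 : Fin 3 → R) = Pi.single 0 1 := by simpa using hframe.r_smul
  have hry : r • y = y := by
    calc r • y = r • h • r • (Pi.single 0 1 : Fin 3 → R) := by rw [hr₀]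
      _ = y := by rw [← mul_smul, ← mul_smul, hrel.r_mul_h_mul_r]
  have hr := (coe_a_r_of_isFrame_one hrel hframe).2
  have hy2 : y 2 = 0 := by
    simpa [Matrix.SpecialLinearGroup.smul_def, hr, mulVec, dotProduct, Fin.sum_univ_three]
      using congr_fun hry 0
  have hy1 : y 1 = 0 := by
    simpa [Matrix.SpecialLinearGroup.smul_def, hr, mulVec, dotProduct, Fin.sum_univ_three, hy2]
      using (congr_fun hry 1).symm
  refine ⟨y 0, funext fun i ↦ ?_⟩
  fin_cases i <;> simp [hy1, hy2]

theorem coe_h_of_isFrame_one (hrel : S4Relations a b r h) (hframe : IsFrame a b r 1) :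
    h.1 = !![-1, 0, 1; 0, -1, 1; 0, 0, 1] := by
  obtain ⟨p, hp⟩ := exists_h_smul_single_zero_eq hrel hframe
  have ha := (coe_a_r_of_isFrame_one hrel hframe).1
  have ha₀ : a • (Pi.single 0 1 : Fin 3 → R) = Pi.single 1 1 := by simpa using hframe.a_smul
  have hb₀ : b • (Pi.single 0 1 : Fin 3 → R) = Pi.single 2 1 := by simpa using hframe.b_smul
  have hh₁ : h • (Pi.single 1 1 : Fin 3 → R) = p • Pi.single 1 1 := by
    rw [← ha₀, ← mul_smul, hrel.h_mul_a, mul_smul, hp, smul_comm, ha₀]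
  have hh₂ : h • (Pi.single 2 1 : Fin 3 → R) = p • a • (Pi.single 2 1 : Fin 3 → R) := by
    rw [← hb₀, ← mul_smul, hrel.h_mul_b, mul_smul, hp, smul_comm, mul_smul]
  have hh := coe_eq_of_smul_single hp hh₁ hh₂
  have hp2 : p * p = 1 := by
    have hh0 : h • h • (Pi.single 0 1 : Fin 3 → R) = Pi.single 0 1 := by
      rw [← mul_smul, hrel.h_mul_h, one_smul]
    simpa [hp, smul_comm h p] using congr_fun hh0 0
  have det_h : -(p * p * p) = 1 := by
    simpa [hh, det_fin_three, Matrix.SpecialLinearGroup.smul_def, ha] using h.2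
  have hp_neg : p = -1 := by linear_combination -p * hp2 - det_h
  rw [hh]
  simp [hp_neg, Matrix.SpecialLinearGroup.smul_def, ha]

theorem eq_of_isFrame_one {a' b' r' h' : SL(3, R)} (hrel : S4Relations a b r h)
    (hframe : IsFrame a b r 1) (hrel' : S4Relations a' b' r' h') (hframe' : IsFrame a' b' r' 1) :
    a = a' ∧ r = r' ∧ h = h' := by
  obtain ⟨ha, hr⟩ := coe_a_r_of_isFrame_one hrel hframe
  obtain ⟨ha', hr'⟩ := coe_a_r_of_isFrame_one hrel' hframe'
  exact ⟨Subtype.ext (ha.trans ha'.symm), Subtype.ext (hr.trans hr'.symm), Subtype.ext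
    ((coe_h_of_isFrame_one hrel hframe).trans (coe_h_of_isFrame_one hrel' hframe').symm)⟩

end NormalForm

section Frame

variable {R : Type*} [CommRing R]

theorem comp_smul_eq_map_smul {S : Type*} [CommRing S] (π : R →+* S) (g : SL(3, R))
    (v : Fin 3 → R) :
    π ∘ (g • v) = Matrix.SpecialLinearGroup.map π g • (π ∘ v) :=
  funext (π.map_mulVec g.1 v)

theorem exists_smul_eq_self_comp_eq {π : R →+* ZMod 2} {r : SL(3, R)} (hr : r ^ 3 = 1)
    {v : Fin 3 → ZMod 2} (hv : Matrix.SpecialLinearGroup.map π r • v = v) :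
    ∃ y : Fin 3 → R, r • y = y ∧ π ∘ y = v := by
  obtain ⟨w, rfl⟩ := (ZMod.ringHom_surjective π).comp_left v
  refine ⟨w + r • w + r • r • w, ?_, ?_⟩
  · have hr3 : r • r • r • w = w := by rw [← mul_smul, ← mul_smul, ← pow_three', hr, one_smul]
    rw [smul_add, smul_add, hr3]
    abel
  · beta_reduce at hv ⊢
    have hadd (x y : Fin 3 → R) : π ∘ (x + y) = π ∘ x + π ∘ y := by
      ext i
      simp
    simp only [hadd, comp_smul_eq_map_smul, hv, CharTwo.add_self_eq_zero, zero_add]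

theorem exists_isFrame_map_eq [HenselianLocalRing R] (π : R →+* ZMod 2) {a b r : SL(3, R)}
    (hr : r ^ 3 = 1) {N : SL(3, ZMod 2)}
    (hN : IsFrame (Matrix.SpecialLinearGroup.map π a) (Matrix.SpecialLinearGroup.map π b)
      (Matrix.SpecialLinearGroup.map π r) N) :
    ∃ M, Matrix.SpecialLinearGroup.map π M = N ∧ IsFrame a b r M := by
  have hπ := ZMod.ringHom_surjective π
  obtain ⟨y, hry, hy⟩ := exists_smul_eq_self_comp_eq hr hN.r_smul
  let F : Matrix (Fin 3) (Fin 3) R := (of ![y, a • y, b • y])ᵀ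
  have hcol (j : Fin 3) : π ∘ F.col j = N • Pi.single j 1 := by
    fin_cases j
    · exact hy
    · exact (comp_smul_eq_map_smul π a y).trans (hy ▸ hN.a_smul)
    · exact (comp_smul_eq_map_smul π b y).trans (hy ▸ hN.b_smul)
  have hF : π.mapMatrix F = N.1 := by
    ext i j
    exact (congr_fun (hcol j) i).trans (by simp [Matrix.SpecialLinearGroup.smul_def])
  obtain ⟨c, M, hM, hMN⟩ := exists_coe_eq_smul_map_eq hπ (by decide) hF
  have hMcol (j : Fin 3) : M • Pi.single j 1 = c • F.col j := by
    rw [Matrix.SpecialLinearGroup.smul_def, hM]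
    simp
  refine ⟨M, hMN, ?_, ?_, ?_⟩
  · rw [hMcol, hMcol, smul_comm]
    rfl
  · rw [hMcol, hMcol, smul_comm]
    rfl
  · rw [hMcol, smul_comm]
    exact congrArg (c • ·) hry

end Frame

section Parabolic

variable {R : Type*} [CommRing R] [HenselianLocalRing R]

theorem hasConjugateLifts_of_s4Relations (π : R →+* ZMod 2) {T : Subgroup SL(3, ZMod 2)}
    {a b r h : T} (hrel : S4Relations a b r h) (hgen : Subgroup.closure {a, r, h} = ⊤)
    {N : SL(3, ZMod 2)} (hN : IsFrame (a : SL(3, ZMod 2)) b r N) :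
    HasConjugateLifts (Matrix.SpecialLinearGroup.map π) T := by
  have exists_isFrame (μ : T →* SL(3, R))
      (hμ : ∀ g, Matrix.SpecialLinearGroup.map π (μ g) = g) :
      ∃ M, Matrix.SpecialLinearGroup.map π M = N ∧ IsFrame (μ a) (μ b) (μ r) M :=
    exists_isFrame_map_eq π (hrel.map μ).r_pow_three (by rwa [hμ, hμ, hμ])
  intro μ ν hμ hν
  obtain ⟨M, hMN, hM⟩ := exists_isFrame μ hμ
  obtain ⟨L, hLN, hL⟩ := exists_isFrame ν hν
  have hrel_conj (κ : T →* SL(3, R)) (K : SL(3, R)) :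
      S4Relations (K⁻¹ * κ a * K) (K⁻¹ * κ b * K) (K⁻¹ * κ r * K) (K⁻¹ * κ h * K) := by
    simpa using (hrel.map κ).map (MulAut.conj K⁻¹).toMonoidHom
  obtain ⟨ha, hr, hh⟩ :=
    eq_of_isFrame_one (hrel_conj μ M) hM.conj (hrel_conj ν L) hL.conj
  have hconj : (MulAut.conj M⁻¹).toMonoidHom.comp μ = (MulAut.conj L⁻¹).toMonoidHom.comp ν := by
    refine MonoidHom.eq_of_eqOn_dense hgen ?_
    rintro g (rfl | rfl | rfl)
    · simpa using ha
    · simpa using hr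
    · simpa using hh
  refine ⟨L * M⁻¹, by rw [MonoidHom.mem_ker, map_mul, map_inv, hMN, hLN, mul_inv_cancel],
    fun g ↦ ?_⟩
  have hg : M⁻¹ * μ g * M = L⁻¹ * ν g * L := by simpa using DFunLike.congr_fun hconj g
  calc ν g = L * (L⁻¹ * ν g * L) * L⁻¹ := by group
    _ = L * M⁻¹ * μ g * (L * M⁻¹)⁻¹ := by rw [← hg]; group

theorem hasConjugateLifts_T2 (π : R →+* ZMod 2) :
    HasConjugateLifts (Matrix.SpecialLinearGroup.map π) T2 := by
  let a : T2 := ⟨⟨!![1, 0, 1; 0, 1, 0; 0, 0, 1], by decide⟩, by constructor <;> decide⟩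
  let b : T2 := ⟨⟨!![1, 0, 0; 0, 1, 1; 0, 0, 1], by decide⟩, by constructor <;> decide⟩
  let r : T2 := ⟨⟨!![0, 1, 0; 1, 1, 0; 0, 0, 1], by decide⟩, by constructor <;> decide⟩
  let h : T2 := ⟨⟨!![1, 1, 0; 0, 1, 0; 0, 0, 1], by decide⟩, by constructor <;> decide⟩
  let N : SL(3, ZMod 2) := ⟨!![0, 1, 0; 0, 0, 1; 1, 1, 1], by decide⟩
  have hrel : S4Relations a b r h := by constructor <;> decide +kernel
  have hgen : Subgroup.closure {a, r, h} = ⊤ := by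
    have hwords : ∀ g : SL(3, ZMod 2), g.1 2 0 = 0 ∧ g.1 2 1 = 0 →
        ∃ (w x : Fin 2) (y : Fin 3) (z : Fin 2), g =
          (r * a * r⁻¹) ^ w.1 * a ^ x.1 * r ^ y.1 * h ^ z.1 := by
      decide +kernel
    have ha : a ∈ Subgroup.closure {a, r, h} := Subgroup.subset_closure (by simp)
    have hr : r ∈ Subgroup.closure {a, r, h} := Subgroup.subset_closure (by simp)
    have hh : h ∈ Subgroup.closure {a, r, h} := Subgroup.subset_closure (by simp)
    refine (Subgroup.eq_top_iff' _).2 fun g ↦ ?_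
    obtain ⟨w, x, y, z, hg⟩ := hwords g.1 g.2
    rw [show g = (r * a * r⁻¹) ^ w.1 * a ^ x.1 * r ^ y.1 * h ^ z.1 from Subtype.ext hg]
    exact mul_mem (mul_mem (mul_mem (pow_mem (mul_mem (mul_mem hr ha) (inv_mem hr)) _)
      (pow_mem ha _)) (pow_mem hr _)) (pow_mem hh _)
  have hN : IsFrame (a : SL(3, ZMod 2)) b r N := by constructor <;> decide +kernel
  exact hasConjugateLifts_of_s4Relations π hrel hgen hN

end Parabolic

section InverseTranspose

variable {m n R S : Type*} [Fintype m] [DecidableEq m] [Fintype n] [DecidableEq n]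
  [CommRing R] [CommRing S]

/-- The automorphism `g ↦ (gᵀ)⁻¹` of `SLₙ(R)`. -/
def invTranspose (n R : Type*) [Fintype n] [DecidableEq n] [CommRing R] :
    Matrix.SpecialLinearGroup n R ≃* Matrix.SpecialLinearGroup n R where
  toFun g := g.transpose⁻¹
  invFun g := g⁻¹.transpose
  left_inv g := congrArg Matrix.SpecialLinearGroup.transpose (inv_inv g.transpose)
  right_inv g := inv_inv g
  map_mul' g h := by
    rw [← _root_.mul_inv_rev]
    exact congrArg _ (Subtype.ext (transpose_mul g.1 h.1))

/-- Relabelling of rows and columns along `e`, as an isomorphism of special linear groups. -/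
def reindexSL (R : Type*) [CommRing R] (e : m ≃ n) :
    Matrix.SpecialLinearGroup m R ≃* Matrix.SpecialLinearGroup n R where
  toFun g := ⟨reindex e e g.1, by rw [det_reindex_self, g.2]⟩
  invFun g := ⟨reindex e.symm e.symm g.1, by rw [det_reindex_self, g.2]⟩
  left_inv g := by
    ext
    simp
  right_inv g := by
    ext
    simp
  map_mul' g h := Subtype.ext (map_mul (reindexAlgEquiv R R e) g.1 h.1)

theorem map_invTranspose (f : R →+* S) (g : Matrix.SpecialLinearGroup n R) :
    Matrix.SpecialLinearGroup.map f (invTranspose n R g) =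
      invTranspose n S (Matrix.SpecialLinearGroup.map f g) :=
  map_inv (Matrix.SpecialLinearGroup.map f) g.transpose

theorem map_reindexSL (f : R →+* S) (e : m ≃ n) (g : Matrix.SpecialLinearGroup m R) :
    Matrix.SpecialLinearGroup.map f (reindexSL R e g) =
      reindexSL S e (Matrix.SpecialLinearGroup.map f g) :=
  rfl

end InverseTranspose

section Duality

/-- Duality for `SL₃`: inverse transpose, followed by reversing the order of the basis. It preserves
the upper triangular matrices and exchanges the two maximal parabolic subgroups containing them. -/
def revInvTranspose (R : Type*) [CommRing R] : SL(3, R) ≃* SL(3, R) :=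
  (reindexSL R Fin.revPerm).trans (invTranspose (Fin 3) R)

theorem map_revInvTranspose_T2 : T2.map (revInvTranspose (ZMod 2) : _ →* _) = T1 := by
  ext g
  have hg : (revInvTranspose (ZMod 2)).symm g ∈ T2 ↔ g⁻¹ ∈ T1 := by
    exact and_comm
  exact Subgroup.mem_map_equiv.trans (hg.trans inv_mem_iff)

theorem hasConjugateLifts_T1 {R : Type*} [CommRing R] [HenselianLocalRing R] (π : R →+* ZMod 2) :
    HasConjugateLifts (Matrix.SpecialLinearGroup.map π) T1 :=
  map_revInvTranspose_T2 ▸ (hasConjugateLifts_T2 π).map (revInvTranspose R)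
    (revInvTranspose (ZMod 2)) fun g ↦ by
      simp only [revInvTranspose, MulEquiv.trans_apply, map_invTranspose, map_reindexSL]

end Duality

theorem stmt_0_general {R : Type*} [CommRing R] [HenselianLocalRing R] (π : R →+* ZMod 2)
    (μ₁ : T1 →* SL(3, R)) (μ₂ : T2 →* SL(3, R))
    (hμ₁ : ∀ g : T1, Matrix.SpecialLinearGroup.map π (μ₁ g) = g)
    (hμ₂ : ∀ g : T2, Matrix.SpecialLinearGroup.map π (μ₂ g) = g)
    (hagree : ∀ (g : SL(3, ZMod 2)) (hg₁ : g ∈ T1) (hg₂ : g ∈ T2),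
      μ₁ ⟨g, hg₁⟩ = μ₂ ⟨g, hg₂⟩) :
    ∃ (μ : SL(3, ZMod 2) →* SL(3, R)) (Z : SL(3, R)),
      (∀ g, Matrix.SpecialLinearGroup.map π (μ g) = g) ∧
      (∀ (g : SL(3, ZMod 2)) (hg₁ : g ∈ T1), g ∈ T2 →
        Z * μ₁ ⟨g, hg₁⟩ = μ₁ ⟨g, hg₁⟩ * Z) ∧
      (∀ g : T1, μ g = μ₁ g) ∧
      ∀ g : T2, μ g = Z * μ₂ g * Z⁻¹ := by
  obtain ⟨α, hα, hπα⟩ := exists_mul_self_eq_neg_two_sub π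
  obtain ⟨ρ, hρ⟩ := exists_section_map π hα hπα
  exact exists_amalgam_of_hasConjugateLifts (hasConjugateLifts_T1 π) (hasConjugateLifts_T2 π)
    hρ hμ₁ hμ₂ hagree

theorem stmt_0 (μ₁ : T1 →* SL3Z2) (μ₂ : T2 →* SL3Z2)
    (hμ₁ : ∀ g : T1, redMod2 (μ₁ g) = (g : SL3F2))
    (hμ₂ : ∀ g : T2, redMod2 (μ₂ g) = (g : SL3F2))
    (hagree : ∀ (g : SL3F2) (hg1 : g ∈ T1) (hg2 : g ∈ T2),
      μ₁ ⟨g, hg1⟩ = μ₂ ⟨g, hg2⟩) :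
    ∃ (μ : SL3F2 →* SL3Z2) (Z : SL3Z2),
      (∀ g : SL3F2, redMod2 (μ g) = g) ∧
      (∀ (g : SL3F2) (hg1 : g ∈ T1) (hg2 : g ∈ T2),
        Z * μ₁ ⟨g, hg1⟩ = μ₁ ⟨g, hg1⟩ * Z) ∧
      (∀ g : T1, μ (g : SL3F2) = μ₁ g) ∧
      (∀ g : T2, μ (g : SL3F2) = Z * μ₂ g * Z⁻¹) :=
  stmt_0_general PadicInt.toZMod μ₁ μ₂ hμ₁ hμ₂ hagree
end

section
/- The subalgebra of F_2[x,y,z,w] consisting of the polynomials invariant under every element of GL_4(F_2) equals the F_2-subalgebra generated by a_8, a_12, a_14, a_15; moreover a_8, a_12, a_14, a_15 are algebraically independent over F_2. -/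
noncomputable section

open MvPolynomial

/-- The set of `𝔽₂`-linear combinations (i.e. subset sums) of the family `v`. -/
def spanF2 {R : Type*} [CommRing R] {n : ℕ} (v : Fin n → R) : Finset R :=
  letI := Classical.decEq R
  Finset.image (fun s : Finset (Fin n) => ∑ j ∈ s, v j) Finset.univ

/-- The Dickson invariant `D_i(v₁, …, vₙ)`: the `(2^n - 2^(n-i))`-th elementary symmetric
polynomial of the `2^n` elements of the `𝔽₂`-linear span of `v₁, …, vₙ`. -/
def dickson {R : Type*} [CommRing R] {n : ℕ} (v : Fin n → R) (i : ℕ) : R :=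
  (spanF2 v).val.esymm (2 ^ n - 2 ^ (n - i))

/-- The product `∏_{α ∈ span_{𝔽₂}(v)} (w + α)`. -/
def prodAdd {R : Type*} [CommRing R] {n : ℕ} (v : Fin n → R) (w : R) : R :=
  ∏ α ∈ spanF2 v, (w + α)

/-- The polynomial ring `𝔽₂[x, y, z, w]`. -/
abbrev R4 := MvPolynomial (Fin 4) (ZMod 2)

def xP : R4 := X 0
def yP : R4 := X 1
def zP : R4 := X 2
def wP : R4 := X 3

def a8 : R4 := dickson ![xP, yP, zP, wP] 1
def a12 : R4 := dickson ![xP, yP, zP, wP] 2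
def a14 : R4 := dickson ![xP, yP, zP, wP] 3
def a15 : R4 := dickson ![xP, yP, zP, wP] 4

def b4 : R4 := dickson ![xP, yP, zP] 1
def b6 : R4 := dickson ![xP, yP, zP] 2
def b7 : R4 := dickson ![xP, yP, zP] 3
def b8 : R4 := prodAdd ![xP, yP, zP] wP

def c2 : R4 := dickson ![xP, yP] 1
def c3 : R4 := dickson ![xP, yP] 2
def c4' : R4 := prodAdd ![xP, yP] zP
def c4'' : R4 := prodAdd ![xP, yP] wP

/-- The action of a matrix `g` on `𝔽₂[x,y,z,w]`, sending the variable `xᵢ` to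
`∑ⱼ gᵢⱼ xⱼ`. -/
def matAct (g : Matrix (Fin 4) (Fin 4) (ZMod 2)) : R4 →ₐ[ZMod 2] R4 :=
  aeval (fun i => ∑ j, C (g i j) * X j)

/-!
For a finite field `F` with `q` elements, the product of `T - u` over all linear forms `u` in
`x₁, …, xₙ` is a `q`-linearized polynomial in `T`: adjoining one more form `u` turns the product
`P(T)` into `∏ c, (P(T) - c P(u)) = P(T) ^ q - P(u) ^ (q - 1) P(T)`. Its nonzero nonleading
coefficients are therefore, up to sign, the Dickson invariants; let `D` be the algebra they
generate. The polynomial ring is integral over `D`, so comparing transcendence degrees makes the `n`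
Dickson invariants algebraically independent. Hence `D` is a polynomial ring, in particular
integrally closed. The product has distinct roots, which generate the polynomial ring, so the
extension of fraction fields is Galois; its automorphisms permute the linear forms and are thus
linear substitutions. An invariant lies in the fraction field of `D` and is integral over `D`, so it
lies in `D`.
-/

open scoped Polynomial

section LinearizedPolynomial

section Semiring

variable (F A : Type*) [Fintype F] [Semiring A]

/-- The `q`-linearized polynomials over `A`, where `q` is the cardinality of `F`: the `A`-linear
combinations of the powers `X ^ q ^ i`. -/
def linearizedPolynomial : Submodule A A[X] :=
  Submodule.span A (Set.range fun i : ℕ => Polynomial.X ^ Fintype.card F ^ i)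

variable {F A}

theorem exists_eq_card_pow_of_coeff_ne_zero {P : A[X]} (hP : P ∈ linearizedPolynomial F A)
    {m : ℕ} (hm : P.coeff m ≠ 0) : ∃ i, m = Fintype.card F ^ i := by
  contrapose! hm
  induction hP using Submodule.span_induction with
  | mem P hP =>
    obtain ⟨i, rfl⟩ := hP
    exact (Polynomial.coeff_X_pow _ _).trans (if_neg (hm i))
  | zero => simp
  | add P Q _ _ hP hQ => simp [hP, hQ]
  | smul a P _ hP => simp [hP]

end Semiring

variable (F : Type*) [Field F] [Fintype F] {A : Type*} [CommRing A] [Algebra F A]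

theorem prod_X_sub_C_eq_X_pow_card_sub_X :
    ∏ c : F, (Polynomial.X - Polynomial.C c) = Polynomial.X ^ Fintype.card F - Polynomial.X := by
  have monic : (Polynomial.X ^ Fintype.card F - Polynomial.X : F[X]).Monic :=
    Polynomial.monic_X_pow_sub (by simpa using Fintype.one_lt_card)
  have card_roots : (Polynomial.X ^ Fintype.card F - Polynomial.X : F[X]).roots.card =
      (Polynomial.X ^ Fintype.card F - Polynomial.X : F[X]).natDegree := by
    rw [FiniteField.roots_X_pow_card_sub_X,
      FiniteField.X_pow_card_sub_X_natDegree_eq F Fintype.one_lt_card]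
    rfl
  rw [← Polynomial.prod_multiset_X_sub_C_of_monic_of_roots_card_eq monic card_roots,
    FiniteField.roots_X_pow_card_sub_X]
  rfl

theorem prod_sub_smul_eq (x y : A) :
    ∏ c : F, (x - c • y) = x ^ Fintype.card F - y ^ (Fintype.card F - 1) * x := by
  have homogenized : ∏ c : F, (Polynomial.X - Polynomial.C c).homogenize 1 =
      (Polynomial.X ^ Fintype.card F - Polynomial.X : F[X]).homogenize (Fintype.card F) := by
    have natDegree_le (c : F) (_ : c ∈ Finset.univ) :
        (Polynomial.X - Polynomial.C c).natDegree ≤ 1 := Polynomial.natDegree_X_sub_C_le c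
    rw [← Polynomial.homogenize_finsetProd natDegree_le, prod_X_sub_C_eq_X_pow_card_sub_X,
      Finset.sum_const, smul_eq_mul, mul_one, Finset.card_univ]
  calc
    ∏ c : F, (x - c • y)
        = MvPolynomial.aeval ![x, y]
            (∏ c : F, (Polynomial.X - Polynomial.C c).homogenize 1) := by
      simp [Algebra.smul_def]
    _ = x ^ Fintype.card F - y ^ (Fintype.card F - 1) * x := by
      rw [homogenized, Polynomial.homogenize_sub, Polynomial.homogenize_X_pow le_rfl,
        Polynomial.homogenize_X Fintype.card_ne_zero]
      simp [mul_comm]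

variable {F}

theorem pow_card_mem_linearizedPolynomial {P : A[X]} (hP : P ∈ linearizedPolynomial F A) :
    P ^ Fintype.card F ∈ linearizedPolynomial F A := by
  have frobenius_eq (Q : A[X]) :
      Q ^ Fintype.card F = FiniteField.frobeniusAlgHom F A[X] Q := rfl
  induction hP using Submodule.span_induction with
  | mem P hP =>
    obtain ⟨i, rfl⟩ := hP
    exact Submodule.subset_span ⟨i + 1, by simp only [pow_succ, pow_mul]⟩
  | zero => simp [zero_pow Fintype.card_ne_zero]
  | add P Q _ _ hP hQ =>
    rw [frobenius_eq, map_add]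
    exact add_mem hP hQ
  | smul a P _ hP =>
    rw [smul_pow]
    exact Submodule.smul_mem _ _ hP

theorem comp_sub_smul_of_mem_linearizedPolynomial {P : A[X]}
    (hP : P ∈ linearizedPolynomial F A) (p r : A[X]) (c : F) :
    P.comp (p - c • r) = P.comp p - c • P.comp r := by
  induction hP using Submodule.span_induction with
  | mem P hP =>
    obtain ⟨i, rfl⟩ := hP
    have pow_eq (s : A[X]) : s ^ Fintype.card F ^ i =
        (FiniteField.frobeniusAlgHom F A[X] ^ i) s := by
      rw [AlgHom.coe_pow, FiniteField.coe_frobeniusAlgHom, pow_iterate]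
    simp only [Polynomial.X_pow_comp]
    simp only [pow_eq, map_sub, map_smul]
  | zero => simp
  | add P Q _ _ hP hQ => simp only [Polynomial.add_comp, hP, hQ, smul_add]; abel
  | smul a P _ hP => simp only [Polynomial.smul_comp, hP, smul_sub, smul_comm a c]

variable (F) in
/-- The product of `X - u` over the `F`-linear combinations `u` of the family `v`, each taken as
often as it arises. For a linearly independent family this is the polynomial whose simple roots
form the span of `v`. -/
def spanPolynomial {ι : Type*} [Fintype ι] [DecidableEq ι] (v : ι → A) : A[X] :=
  ∏ c : ι → F, (Polynomial.X - Polynomial.C (Fintype.linearCombination F v c))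

theorem spanPolynomial_monic {ι : Type*} [Fintype ι] [DecidableEq ι] (v : ι → A) :
    (spanPolynomial F v).Monic :=
  Polynomial.monic_prod_X_sub_C _ _

theorem natDegree_spanPolynomial [Nontrivial A] {ι : Type*} [Fintype ι] [DecidableEq ι]
    (v : ι → A) :
    (spanPolynomial F v).natDegree = Fintype.card F ^ Fintype.card ι := by
  simp [spanPolynomial]

theorem spanPolynomial_cons_eq_prod_comp {n : ℕ} (u : A) (v : Fin n → A) :
    spanPolynomial F (Fin.cons u v : Fin (n + 1) → A) =
      ∏ c : F, (spanPolynomial F v).comp (Polynomial.X - c • Polynomial.C u) := by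
  simp only [spanPolynomial, Polynomial.prod_comp, ← Fintype.prod_prod_type']
  refine (Fintype.prod_equiv (Fin.consEquiv fun _ => F) _ _ fun c => ?_).symm
  simp only [Polynomial.sub_comp, Polynomial.X_comp, Polynomial.C_comp, Polynomial.smul_C,
    sub_sub, ← Polynomial.C_add, Fintype.linearCombination_apply, Fin.consEquiv_apply,
    Fin.sum_univ_succ, Fin.cons_zero, Fin.cons_succ]

theorem spanPolynomial_mem_linearizedPolynomial {n : ℕ} (v : Fin n → A) :
    spanPolynomial F v ∈ linearizedPolynomial F A := by
  induction v using Fin.consInduction with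
  | elim0 =>
    exact Submodule.subset_span ⟨0, by simp [spanPolynomial, Fintype.linearCombination_apply]⟩
  | cons u v hv =>
    simp only [spanPolynomial_cons_eq_prod_comp, comp_sub_smul_of_mem_linearizedPolynomial hv,
      Polynomial.comp_X, Polynomial.comp_C, prod_sub_smul_eq, ← Polynomial.C_pow,
      ← Polynomial.smul_eq_C_mul]
    exact sub_mem (pow_card_mem_linearizedPolynomial hv) (Submodule.smul_mem _ _ hv)

theorem coeff_spanPolynomial_mem {n : ℕ} {v : Fin n → A} {D : Subalgebra F A}
    (hD : ∀ i < n, (spanPolynomial F v).coeff (Fintype.card F ^ i) ∈ D) (m : ℕ) :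
    (spanPolynomial F v).coeff m ∈ D := by
  nontriviality A
  have natDegree_eq : (spanPolynomial F v).natDegree = Fintype.card F ^ n := by
    rw [natDegree_spanPolynomial, Fintype.card_fin]
  by_cases hm : (spanPolynomial F v).coeff m = 0
  · exact hm ▸ zero_mem D
  obtain ⟨i, rfl⟩ :=
    exists_eq_card_pow_of_coeff_ne_zero (spanPolynomial_mem_linearizedPolynomial v) hm
  have hi : i ≤ n := (Nat.pow_le_pow_iff_right Fintype.one_lt_card).1
    (natDegree_eq ▸ Polynomial.le_natDegree_of_ne_zero hm)
  obtain hi | rfl := hi.lt_or_eq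
  · exact hD i hi
  · rw [← natDegree_eq, (spanPolynomial_monic v).coeff_natDegree]
    exact one_mem D

end LinearizedPolynomial

theorem isIntegrallyClosed_adjoin {R A ι : Type*} [CommRing R] [CommRing A] [Algebra R A]
    {x : ι → A} [IsIntegrallyClosed (MvPolynomial ι R)] (hx : AlgebraicIndependent R x) :
    IsIntegrallyClosed (Algebra.adjoin R (Set.range x)) :=
  IsIntegrallyClosed.of_equiv hx.aevalEquiv.toRingEquiv

section GaloisDescent

variable {A B ι : Type*} [CommRing A] [CommRing B] [Algebra A B] [Fintype ι] {f : A[X]}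
  {r : ι → B}

theorem isIntegral_of_adjoin_roots [FaithfulSMul A B]
    (hf : f.map (algebraMap A B) = ∏ i, (Polynomial.X - Polynomial.C (r i)))
    (hr : Algebra.adjoin A (Set.range r) = ⊤) : Algebra.IsIntegral A B := by
  have monic : f.Monic := Polynomial.monic_of_injective (FaithfulSMul.algebraMap_injective A B)
    (hf ▸ Polynomial.monic_prod_X_sub_C _ _)
  have isIntegral_root (i : ι) : IsIntegral A (r i) := by
    refine ⟨f, monic, ?_⟩
    rw [← Polynomial.eval_map, hf, Polynomial.eval_prod]
    exact Finset.prod_eq_zero (Finset.mem_univ i) (by simp)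
  have : Algebra.IsIntegral A (Algebra.adjoin A (Set.range r)) :=
    Algebra.IsIntegral.adjoin (Set.forall_mem_range.2 isIntegral_root)
  rw [hr] at this
  exact Algebra.IsIntegral.of_surjective Subalgebra.topEquiv.toAlgHom Subalgebra.topEquiv.surjective

theorem map_map_algebraMap_eq_prod (K L : Type*) [CommRing K] [CommRing L] [Algebra A K]
    [Algebra B L] [Algebra K L] [Algebra A L] [IsScalarTower A K L] [IsScalarTower A B L]
    (hf : f.map (algebraMap A B) = ∏ i, (Polynomial.X - Polynomial.C (r i))) :
    (f.map (algebraMap A K)).map (algebraMap K L) =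
      ∏ i, (Polynomial.X - Polynomial.C (algebraMap B L (r i))) := by
  rw [Polynomial.map_map, ← IsScalarTower.algebraMap_eq, IsScalarTower.algebraMap_eq A B L,
    ← Polynomial.map_map, hf]
  simp [Polynomial.map_prod]

theorem isSplittingField_of_adjoin_roots (K L : Type*) [Field K] [Field L] [Algebra A K]
    [Algebra B L] [IsFractionRing B L] [Algebra K L] [Algebra A L]
    [IsScalarTower A K L] [IsScalarTower A B L]
    (hf : f.map (algebraMap A B) = ∏ i, (Polynomial.X - Polynomial.C (r i)))
    (hr : Algebra.adjoin A (Set.range r) = ⊤) :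
    (f.map (algebraMap A K)).IsSplittingField K L := by
  have map_eq := map_map_algebraMap_eq_prod K L hf
  have ne_zero : f.map (algebraMap A K) ≠ 0 := by
    rw [← Polynomial.map_ne_zero_iff (algebraMap K L).injective, map_eq]
    exact (Polynomial.monic_prod_X_sub_C _ _).ne_zero
  rw [isSplittingField_iff_intermediateField, map_eq]
  refine ⟨Polynomial.Splits.prod fun i _ => Polynomial.Splits.X_sub_C _, ?_⟩
  set E := IntermediateField.adjoin K ((f.map (algebraMap A K)).rootSet L)
  have root_mem (i : ι) : algebraMap B L (r i) ∈ E := by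
    refine IntermediateField.subset_adjoin _ _ (Polynomial.mem_rootSet.2 ⟨ne_zero, ?_⟩)
    rw [← Polynomial.eval_map_algebraMap, map_eq, Polynomial.eval_prod]
    exact Finset.prod_eq_zero (Finset.mem_univ i) (by simp)
  have algebraMap_mem (b : B) : algebraMap B L b ∈ E := by
    have hb : b ∈ Algebra.adjoin A (Set.range r) := hr ▸ Algebra.mem_top
    induction hb using Algebra.adjoin_induction with
    | mem b hb =>
      obtain ⟨i, rfl⟩ := hb
      exact root_mem i
    | algebraMap a =>
      rw [← IsScalarTower.algebraMap_apply, IsScalarTower.algebraMap_apply A K L]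
      exact E.algebraMap_mem _
    | add b c _ _ hb hc => rw [map_add]; exact add_mem hb hc
    | mul b c _ _ hb hc => rw [map_mul]; exact mul_mem hb hc
  refine eq_top_iff.2 fun t _ => ?_
  obtain ⟨a, b, _, rfl⟩ := IsFractionRing.div_surjective (A := B) t
  exact div_mem (algebraMap_mem a) (algebraMap_mem b)

theorem isInvariant_of_adjoin_roots [IsDomain B] [FaithfulSMul A B]
    [IsIntegrallyClosed A] [IsIntegrallyClosed B]
    (hf : f.map (algebraMap A B) = ∏ i, (Polynomial.X - Polynomial.C (r i)))
    (hinj : Function.Injective r) (hr : Algebra.adjoin A (Set.range r) = ⊤) :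
    Algebra.IsInvariant A B (B ≃ₐ[A] B) := by
  have : IsDomain A := (FaithfulSMul.algebraMap_injective A B).isDomain
  let K := FractionRing A
  let L := FractionRing B
  let _ : Algebra K L := FractionRing.liftAlgebra A L
  have : Algebra.IsIntegral A B := isIntegral_of_adjoin_roots hf hr
  have : (f.map (algebraMap A K)).IsSplittingField K L := isSplittingField_of_adjoin_roots K L hf hr
  have separable : (f.map (algebraMap A K)).Separable := by
    rw [← Polynomial.separable_map (algebraMap K L), map_map_algebraMap_eq_prod K L hf]
    exact Polynomial.separable_prod_X_sub_C_iff.2 ((IsFractionRing.injective B L).comp hinj)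
  have : FiniteDimensional K L :=
    Polynomial.IsSplittingField.finiteDimensional L (f.map (algebraMap A K))
  have : IsGalois K L := IsGalois.of_separable_splitting_field separable
  exact Algebra.isInvariant_of_isGalois' A K L B

end GaloisDescent

section LinearSubstitution

variable {F : Type*} [CommRing F] {σ : Type*} [Fintype σ]

variable (F σ) in
/-- The linear form with a given coefficient vector, as an element of the polynomial ring. -/
def linearForm : (σ → F) →ₗ[F] MvPolynomial σ F :=
  Fintype.linearCombination F X

theorem linearForm_injective : Function.Injective (linearForm F σ) := by
  nontriviality F
  exact (linearIndependent_X σ F).fintypeLinearCombination_injective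

/-- The linear substitution of variables given by a matrix: the algebra endomorphism sending each
variable to the linear form with coefficients the corresponding row. -/
def linearSubst (g : Matrix σ σ F) : MvPolynomial σ F →ₐ[F] MvPolynomial σ F :=
  aeval fun i => linearForm F σ (g i)

theorem linearSubst_X (g : Matrix σ σ F) (i : σ) : linearSubst g (X i) = linearForm F σ (g i) :=
  aeval_X _ _

theorem linearSubst_linearForm (g : Matrix σ σ F) (c : σ → F) :
    linearSubst g (linearForm F σ c) = linearForm F σ (Matrix.vecMul c g) := by
  rw [Matrix.vecMul_eq_sum, map_sum]
  simp [linearForm, linearSubst, Fintype.linearCombination_apply]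

theorem linearForm_single [DecidableEq σ] (i : σ) : linearForm F σ (Pi.single i 1) = X i := by
  simp [linearForm]

theorem adjoin_range_linearForm (D : Subalgebra F (MvPolynomial σ F)) :
    Algebra.adjoin D (Set.range (linearForm F σ)) = ⊤ := by
  classical
  have adjoin_X_le : Algebra.adjoin F (Set.range X) ≤
      (Algebra.adjoin D (Set.range (linearForm F σ))).restrictScalars F :=
    Algebra.adjoin_le <| Set.range_subset_iff.2 fun i =>
      Algebra.subset_adjoin (R := D) ⟨Pi.single i 1, linearForm_single i⟩
  rw [MvPolynomial.adjoin_range_X] at adjoin_X_le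
  exact eq_top_iff.2 fun _ _ => adjoin_X_le Algebra.mem_top

end LinearSubstitution

section DicksonPolynomial

variable {F : Type*} [Field F] {σ : Type*} [Fintype σ] [DecidableEq σ]

theorem exists_GL_eq_linearSubst {τ : MvPolynomial σ F →ₐ[F] MvPolynomial σ F}
    (hτ : Function.Injective τ) (hX : ∀ i, τ (X i) ∈ Set.range (linearForm F σ)) :
    ∃ g : GL σ F, τ = linearSubst (g : Matrix σ σ F) := by
  choose g hg using hX
  have τ_eq : τ = linearSubst (Matrix.of g) :=
    MvPolynomial.algHom_ext fun i => (hg i).symm.trans (linearSubst_X _ i).symm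
  have isUnit : IsUnit (Matrix.of g) := by
    rw [← Matrix.vecMul_injective_iff_isUnit]
    intro c d hcd
    refine linearForm_injective (hτ ?_)
    simp only [τ_eq, linearSubst_linearForm]
    exact congrArg _ hcd
  exact ⟨isUnit.unit, τ_eq⟩

variable [Fintype F]

variable (F σ) in
/-- The polynomial whose simple roots are the linear forms in the variables `σ`. Its nonleading
coefficients are, up to sign, the Dickson invariants. -/
def dicksonPolynomial : (MvPolynomial σ F)[X] :=
  spanPolynomial F X

theorem dicksonPolynomial_eq_prod :
    dicksonPolynomial F σ = ∏ c, (Polynomial.X - Polynomial.C (linearForm F σ c)) :=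
  rfl

theorem isRoot_dicksonPolynomial_iff {p : MvPolynomial σ F} :
    (dicksonPolynomial F σ).IsRoot p ↔ p ∈ Set.range (linearForm F σ) := by
  simp only [dicksonPolynomial_eq_prod, Polynomial.isRoot_prod, Polynomial.root_X_sub_C,
    Finset.mem_univ, true_and, Set.mem_range]

theorem map_linearSubst_dicksonPolynomial (g : GL σ F) :
    (dicksonPolynomial F σ).map (linearSubst (g : Matrix σ σ F) : _ →+* _) =
      dicksonPolynomial F σ := by
  have bijective : Function.Bijective fun c : σ → F => Matrix.vecMul c (g : Matrix σ σ F) :=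
    Finite.injective_iff_bijective.1 (Matrix.vecMul_injective_iff_isUnit.2 g.isUnit)
  rw [dicksonPolynomial_eq_prod, Polynomial.map_prod]
  refine Fintype.prod_bijective _ bijective _ _ fun c => ?_
  rw [Polynomial.map_sub, Polynomial.map_X, Polynomial.map_C, RingHom.coe_coe,
    linearSubst_linearForm]

theorem linearSubst_coeff_dicksonPolynomial (g : GL σ F) (m : ℕ) :
    linearSubst (g : Matrix σ σ F) ((dicksonPolynomial F σ).coeff m) =
      (dicksonPolynomial F σ).coeff m := by
  conv_rhs => rw [← map_linearSubst_dicksonPolynomial g, Polynomial.coeff_map]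
  rfl

theorem exists_map_eq_dicksonPolynomial {D : Subalgebra F (MvPolynomial σ F)}
    (hD : ∀ m, (dicksonPolynomial F σ).coeff m ∈ D) :
    ∃ f : D[X], f.map (algebraMap D (MvPolynomial σ F)) = dicksonPolynomial F σ :=
  (Polynomial.lifts_iff_coeff_lifts _).2 fun m => ⟨⟨_, hD m⟩, rfl⟩

theorem isIntegral_of_coeff_dicksonPolynomial_mem {D : Subalgebra F (MvPolynomial σ F)}
    (hD : ∀ m, (dicksonPolynomial F σ).coeff m ∈ D) : Algebra.IsIntegral D (MvPolynomial σ F) := by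
  obtain ⟨f, hf⟩ := exists_map_eq_dicksonPolynomial hD
  exact isIntegral_of_adjoin_roots hf (adjoin_range_linearForm D)

theorem mem_of_forall_linearSubst_eq {D : Subalgebra F (MvPolynomial σ F)} [IsIntegrallyClosed D]
    (hD : ∀ m, (dicksonPolynomial F σ).coeff m ∈ D) {p : MvPolynomial σ F}
    (hp : ∀ g : GL σ F, linearSubst (g : Matrix σ σ F) p = p) : p ∈ D := by
  obtain ⟨f, hf⟩ := exists_map_eq_dicksonPolynomial hD
  have isInvariant :
      Algebra.IsInvariant D (MvPolynomial σ F) (MvPolynomial σ F ≃ₐ[D] MvPolynomial σ F) :=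
    isInvariant_of_adjoin_roots hf linearForm_injective (adjoin_range_linearForm D)
  have isRoot_iff (u : MvPolynomial σ F) :
      u ∈ Set.range (linearForm F σ) ↔ Polynomial.aeval u f = 0 := by
    rw [← isRoot_dicksonPolynomial_iff, ← hf, Polynomial.IsRoot, Polynomial.eval_map_algebraMap]
  have apply_X_mem (τ : MvPolynomial σ F ≃ₐ[D] MvPolynomial σ F) (i : σ) :
      τ (X i) ∈ Set.range (linearForm F σ) := by
    have X_mem : X i ∈ Set.range (linearForm F σ) := ⟨_, linearForm_single i⟩
    rw [isRoot_iff] at X_mem ⊢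
    rw [Polynomial.aeval_algEquiv, AlgHom.comp_apply, X_mem, map_zero]
  obtain ⟨d, rfl⟩ := isInvariant.isInvariant p fun τ => by
    obtain ⟨g, hg⟩ := exists_GL_eq_linearSubst (τ := (τ.restrictScalars F).toAlgHom)
      τ.injective (apply_X_mem τ)
    exact (DFunLike.congr_fun hg p).trans (hp g)
  exact d.2

end DicksonPolynomial

section DicksonAlgebra

variable (F : Type*) [Field F] [Fintype F] (n : ℕ)

/-- The Dickson invariants of `GL n F`, up to sign: for `F` of cardinality `q`, the coefficients of
`dicksonPolynomial` at `X ^ q ^ (n - 1), …, X ^ q, X`, in this order. -/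
def dicksonInvariant (i : Fin n) : MvPolynomial (Fin n) F :=
  (dicksonPolynomial F (Fin n)).coeff (Fintype.card F ^ (n - (i + 1)))

variable {F n}

theorem coeff_dicksonPolynomial_mem_adjoin (m : ℕ) :
    (dicksonPolynomial F (Fin n)).coeff m ∈
      Algebra.adjoin F (Set.range (dicksonInvariant F n)) := by
  refine coeff_spanPolynomial_mem (fun i hi => Algebra.subset_adjoin ?_) m
  refine ⟨⟨n - (i + 1), by omega⟩, ?_⟩
  have sub_sub_eq : n - (n - (i + 1) + 1) = i := by omega
  rw [dicksonInvariant, sub_sub_eq, dicksonPolynomial]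

theorem linearSubst_eq_of_mem_adjoin {p : MvPolynomial (Fin n) F}
    (hp : p ∈ Algebra.adjoin F (Set.range (dicksonInvariant F n))) (g : GL (Fin n) F) :
    linearSubst (g : Matrix (Fin n) (Fin n) F) p = p := by
  have adjoin_le : Algebra.adjoin F (Set.range (dicksonInvariant F n)) ≤
      AlgHom.equalizer (linearSubst (g : Matrix (Fin n) (Fin n) F)) (AlgHom.id F _) :=
    Algebra.adjoin_le <| Set.range_subset_iff.2 fun _ => linearSubst_coeff_dicksonPolynomial g _
  exact adjoin_le hp

theorem algebraicIndependent_dicksonInvariant : AlgebraicIndependent F (dicksonInvariant F n) := by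
  have : Algebra.IsIntegral (Algebra.adjoin F (Set.range (dicksonInvariant F n)))
      (MvPolynomial (Fin n) F) :=
    isIntegral_of_coeff_dicksonPolynomial_mem coeff_dicksonPolynomial_mem_adjoin
  refine (Algebra.IsAlgebraic.isTranscendenceBasis_of_lift_le_trdeg_of_finite F _ ?_).1
  simp [MvPolynomial.trdeg_of_isDomain]

end DicksonAlgebra

theorem stmt_7_general (F : Type*) [Field F] [Fintype F] (n : ℕ) :
    (∀ p : MvPolynomial (Fin n) F,
        (∀ g : GL (Fin n) F, linearSubst (g : Matrix (Fin n) (Fin n) F) p = p) ↔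
          p ∈ Algebra.adjoin F (Set.range (dicksonInvariant F n))) ∧
    AlgebraicIndependent F (dicksonInvariant F n) := by
  have := isIntegrallyClosed_adjoin (algebraicIndependent_dicksonInvariant (F := F) (n := n))
  exact ⟨fun p => ⟨mem_of_forall_linearSubst_eq coeff_dicksonPolynomial_mem_adjoin,
    linearSubst_eq_of_mem_adjoin⟩, algebraicIndependent_dicksonInvariant⟩

section ElementarySymmetric

variable {R : Type*} [CommRing R] [Algebra (ZMod 2) R] {n : ℕ} {v : Fin n → R}

theorem coe_spanF2 : (spanF2 v : Set R) = Set.range (Fintype.linearCombination (ZMod 2) v) := by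
  classical
  ext u
  simp only [spanF2, Finset.coe_image, Finset.coe_univ, Set.image_univ, Set.mem_range]
  constructor
  · rintro ⟨s, rfl⟩
    exact ⟨fun j => if j ∈ s then 1 else 0, by simp [Fintype.linearCombination_apply]⟩
  · rintro ⟨c, rfl⟩
    refine ⟨Finset.univ.filter fun j => c j = 1, ?_⟩
    rw [Finset.sum_filter, Fintype.linearCombination_apply]
    refine Finset.sum_congr rfl fun j _ => ?_
    obtain h | h : c j = 0 ∨ c j = 1 := by generalize c j = a; revert a; decide
    all_goals simp [h]

theorem spanF2_eq_map (hv : LinearIndependent (ZMod 2) v) :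
    spanF2 v = Finset.univ.map
      ⟨Fintype.linearCombination (ZMod 2) v, hv.fintypeLinearCombination_injective⟩ :=
  Finset.coe_injective <| by simp [coe_spanF2]

theorem prod_spanF2_eq_spanPolynomial (hv : LinearIndependent (ZMod 2) v) :
    ∏ u ∈ spanF2 v, (Polynomial.X - Polynomial.C u) = spanPolynomial (ZMod 2) v := by
  rw [spanF2_eq_map hv, Finset.prod_map]
  rfl

theorem card_spanF2 (hv : LinearIndependent (ZMod 2) v) : (spanF2 v).card = 2 ^ n := by
  simp [spanF2_eq_map hv]

theorem dickson_eq_coeff_spanPolynomial (hv : LinearIndependent (ZMod 2) v) (i : ℕ) :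
    dickson v i = (spanPolynomial (ZMod 2) v).coeff (2 ^ (n - i)) := by
  have neg_one : (-1 : R) = 1 := by
    rw [← map_one (algebraMap (ZMod 2) R), ← map_neg]
    rfl
  have le_card : 2 ^ (n - i) ≤ (spanF2 v).val.card :=
    (card_spanF2 hv).ge.trans' (Nat.pow_le_pow_right two_pos (n.sub_le i))
  have vieta := Multiset.prod_X_sub_C_coeff (spanF2 v).val le_card
  rw [Finset.card_val, card_spanF2 hv, neg_one, one_pow, one_mul] at vieta
  rw [dickson, ← vieta, ← prod_spanF2_eq_spanPolynomial hv, Finset.prod]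

end ElementarySymmetric

theorem dicksonInvariant_two_four : dicksonInvariant (ZMod 2) 4 = ![a8, a12, a14, a15] := by
  have variables_eq : ![xP, yP, zP, wP] = (X : Fin 4 → R4) := by
    funext i
    fin_cases i <;> rfl
  funext i
  have dickson_eq : dickson ![xP, yP, zP, wP] (i + 1) = dicksonInvariant (ZMod 2) 4 i := by
    rw [variables_eq, dickson_eq_coeff_spanPolynomial (linearIndependent_X (Fin 4) (ZMod 2)),
      dicksonInvariant, ZMod.card, dicksonPolynomial]
  rw [← dickson_eq]
  fin_cases i <;> rfl

theorem matAct_eq_linearSubst : matAct = linearSubst := by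
  funext g
  simp only [matAct, linearSubst, linearForm, Fintype.linearCombination_apply, smul_eq_C_mul]

theorem stmt_7 :
    (∀ p : R4,
        (∀ g : GL (Fin 4) (ZMod 2), matAct (g : Matrix (Fin 4) (Fin 4) (ZMod 2)) p = p) ↔
          p ∈ Algebra.adjoin (ZMod 2) {a8, a12, a14, a15}) ∧
    AlgebraicIndependent (ZMod 2) ![a8, a12, a14, a15] := by
  have range_eq : Set.range (dicksonInvariant (ZMod 2) 4) = {a8, a12, a14, a15} := by
    simp only [dicksonInvariant_two_four, Matrix.range_cons, Matrix.range_empty,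
      Set.union_empty, Set.singleton_union]
  rw [matAct_eq_linearSubst, ← dicksonInvariant_two_four, ← range_eq]
  exact stmt_7_general (ZMod 2) 4
end
end
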